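/- arXiv:math/0004018 — 2 statements merged into one kernel-verified Lean document; each statement's English description precedes it below -/
import Mathlib

section
/- (The discrete Euler–Poincaré equations for the rigid body Lagrangian ℓ(f) = Tr(fΛ) are equivalent to the Moser–Veselov equations.) Let Λ be a symmetric 3×3 real matrix and let ω, ω' be 3×3 real matrices. Then the following are equivalent: (i) for every skew-symmetric 3×3 matrix ξ, Tr(ω' ξ Λ) = Tr(ξ ω Λ) (these two traces being the left-translated differential of ℓ at ω' and the right-translated differential of ℓ at ω evaluated at ξ, i.e. the two sides of the discrete Euler–Poincaré equation); (ii) Λω' − ω'ᵀΛ = ωΛ − Λωᵀ (the Moser–Veselov equation). -/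
open Matrix

/-! The difference of the two sides of the discrete Euler–Poincaré equation is
`Tr (ξ (Λ ω' − ω Λ))`. Under the trace pairing, the annihilator of the skew-symmetric matrices is
the space of symmetric matrices, and symmetry of `Λ ω' − ω Λ` is a rearrangement of the
Moser–Veselov equation. -/

section TracePairing

variable {n R : Type*} [Fintype n]

theorem trace_mul_eq_zero_of_skew_of_isSymm [CommRing R] (h2 : IsLeftRegular (2 : R))
    {ξ B : Matrix n n R} (hξ : ξᵀ = -ξ) (hB : B.IsSymm) : (ξ * B).trace = 0 := by
  have trace_eq_neg : (ξ * B).trace = -(ξ * B).trace :=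
    calc (ξ * B).trace = (Bᵀ * ξᵀ).trace := by rw [← transpose_mul, trace_transpose]
      _ = -(B * ξ).trace := by rw [hB.eq, hξ, Matrix.mul_neg, trace_neg]
      _ = -(ξ * B).trace := by rw [trace_mul_comm]
  rw [← h2.mul_left_eq_zero_iff, two_mul]
  exact eq_neg_iff_add_eq_zero.mp trace_eq_neg

theorem isSymm_of_forall_skew_trace_mul_eq_zero [NonAssocRing R] {B : Matrix n n R}
    (hB : ∀ ξ : Matrix n n R, ξᵀ = -ξ → (ξ * B).trace = 0) : B.IsSymm := by
  classical
  refine IsSymm.ext fun i j ↦ ?_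
  have hskew : (single i j 1 - single j i 1 : Matrix n n R)ᵀ =
      -(single i j 1 - single j i 1) := by
    rw [transpose_sub, transpose_single, transpose_single, neg_sub]
  have hpair := hB _ hskew
  simpa only [Matrix.sub_mul, trace_sub, trace_single_mul, smul_eq_mul, one_mul, sub_eq_zero]
    using hpair

theorem forall_skew_trace_mul_eq_zero_iff_isSymm [CommRing R] (h2 : IsLeftRegular (2 : R))
    {B : Matrix n n R} :
    (∀ ξ : Matrix n n R, ξᵀ = -ξ → (ξ * B).trace = 0) ↔ B.IsSymm :=
  ⟨isSymm_of_forall_skew_trace_mul_eq_zero,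
    fun hB _ hξ ↦ trace_mul_eq_zero_of_skew_of_isSymm h2 hξ hB⟩

end TracePairing

section DiscreteRigidBody

variable {n R : Type*} [Fintype n] [CommRing R]

theorem trace_mul_mul_sub_trace_mul_mul (Λ ω ω' ξ : Matrix n n R) :
    (ω' * ξ * Λ).trace - (ξ * ω * Λ).trace = (ξ * (Λ * ω' - ω * Λ)).trace := by
  rw [Matrix.mul_sub, trace_sub, ← Matrix.mul_assoc, ← Matrix.mul_assoc, trace_mul_cycle ξ Λ ω']

theorem moser_veselov_iff_isSymm {Λ : Matrix n n R} (hΛ : Λ.IsSymm) (ω ω' : Matrix n n R) :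
    Λ * ω' - ω'ᵀ * Λ = ω * Λ - Λ * ωᵀ ↔ (Λ * ω' - ω * Λ).IsSymm := by
  rw [IsSymm, transpose_sub, transpose_mul, transpose_mul, hΛ.eq, sub_eq_sub_iff_sub_eq_sub,
    eq_comm]

theorem discrete_EP_iff_moser_veselov_general (h2 : IsLeftRegular (2 : R))
    {Λ : Matrix n n R} (hΛ : Λ.IsSymm) (ω ω' : Matrix n n R) :
    (∀ ξ : Matrix n n R, ξᵀ = -ξ → (ω' * ξ * Λ).trace = (ξ * ω * Λ).trace)
      ↔ Λ * ω' - ω'ᵀ * Λ = ω * Λ - Λ * ωᵀ := by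
  rw [moser_veselov_iff_isSymm hΛ, ← forall_skew_trace_mul_eq_zero_iff_isSymm h2]
  simp only [← trace_mul_mul_sub_trace_mul_mul, sub_eq_zero]

end DiscreteRigidBody

/-- The discrete Euler–Poincaré equations for the rigid-body Lagrangian
`ℓ (f) = Tr (f Λ)` are equivalent to the Moser–Veselov equations: for symmetric `Λ`,
`Tr (ω' ξ Λ) = Tr (ξ ω Λ)` for every skew-symmetric `ξ` (the discrete Euler–Poincaré
equation `L*_{ω'} ℓ'(ω') = R*_ω ℓ'(ω)`) if and only if
`Λ ω' − ω'ᵀ Λ = ω Λ − Λ ωᵀ` (the Moser–Veselov equation). -/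
theorem discrete_EP_iff_moser_veselov
    (Λ ω ω' : Matrix (Fin 3) (Fin 3) ℝ) (hΛ : Λᵀ = Λ) :
    (∀ ξ : Matrix (Fin 3) (Fin 3) ℝ, ξᵀ = -ξ →
        (ω' * ξ * Λ).trace = (ξ * ω * Λ).trace)
      ↔ Λ * ω' - ω'ᵀ * Λ = ω * Λ - Λ * ωᵀ :=
  discrete_EP_iff_moser_veselov_general (IsRegular.of_ne_zero two_ne_zero).left hΛ ω ω'
end

section
/- (Invariance of the symplectic leaves: the Casimir C_SO(3) is conserved by the discrete Euler–Poincaré algorithm for the rigid body.) Let Λ be a symmetric 3×3 real matrix and let (ω_k)_{k≥0} be a sequence of orthogonal 3×3 real matrices (ω_kᵀω_k = ω_kω_kᵀ = 1) satisfying the Moser–Veselov equations Λω_{k+1} − ω_{k+1}ᵀΛ = ω_kΛ − Λω_kᵀ for all k ≥ 0. Then the Casimir function C_SO(3)(ω_k) = Tr(ω_k Λ ω_k Λ) is independent of k; equivalently, Tr((Λω_k − ω_kᵀΛ)²) is independent of k. -/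
open Matrix

/-!
Orthogonality turns the right-hand side of the Moser–Veselov equation into a conjugate of the
body momentum `M_k = Λ ω_k − ω_kᵀ Λ`, so the dynamics is the coadjoint motion
`M_{k+1} = ω_k M_k ω_k⁻¹` and every `Tr (M_k ^ p)` is conserved. For symmetric `Λ` the case
`p = 2` is the Casimir, since `Tr (M_k ^ 2) = 2 (Tr (ω_k Λ ω_k Λ) − Tr (Λ ^ 2))`.
-/

section MoserVeselov

variable {n R : Type*} [Fintype n] [CommRing R]

/-- The discrete body angular momentum `Λ f − fᵀ Λ` of the rigid body; Moser and Veselov use the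
opposite sign. -/
def bodyMomentum (Λ f : Matrix n n R) : Matrix n n R := Λ * f - fᵀ * Λ

/-- The Legendre transform `F ℓ(f) = f Λ − Λ fᵀ` of the reduced Lagrangian `ℓ(f) = Tr (f Λ)`, with
the dual of the Lie algebra of skew matrices represented by matrices. -/
def legendreTransform (Λ f : Matrix n n R) : Matrix n n R := f * Λ - Λ * fᵀ

/-- The Casimir `C(f) = Tr (f Λ f Λ)` of the reduced discrete rigid body. For orthogonal `f` and
symmetric `Λ` it is related to the Lie–Poisson Casimir `Tr (μ ^ 2)` by an affine change of
normalization. -/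
def rigidBodyCasimir (Λ f : Matrix n n R) : R := (f * Λ * f * Λ).trace

/-- The Moser–Veselov equation `Λ ω_{k+1} − ω_{k+1}ᵀ Λ = ω_k Λ − Λ ω_kᵀ`, the discrete
Euler–Poincaré equation of the rigid body. Orthogonality of the `ω_k` is not part of it. -/
def IsMoserVeselov (Λ : Matrix n n R) (ω : ℕ → Matrix n n R) : Prop :=
  ∀ k, bodyMomentum Λ (ω (k + 1)) = legendreTransform Λ (ω k)

theorem trace_transpose_mul_mul_transpose_mul {Λ : Matrix n n R} (hΛ : Λ.IsSymm)
    (f : Matrix n n R) : (fᵀ * Λ * fᵀ * Λ).trace = (f * Λ * f * Λ).trace :=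
  calc (fᵀ * Λ * fᵀ * Λ).trace
      = (fᵀ * Λ * fᵀ * Λ)ᵀ.trace := (trace_transpose _).symm
    _ = (Λ * (f * Λ * f)).trace := by
      simp only [transpose_mul, transpose_transpose, hΛ.eq, Matrix.mul_assoc]
    _ = (f * Λ * f * Λ).trace := trace_mul_comm _ _

variable [DecidableEq n]

theorem trace_bodyMomentum_sq {Λ f : Matrix n n R} (hΛ : Λ.IsSymm) (hf : f * fᵀ = 1) :
    (bodyMomentum Λ f ^ 2).trace = 2 * (rigidBodyCasimir Λ f - (Λ ^ 2).trace) := by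
  have square_left : (Λ * f * (Λ * f)).trace = rigidBodyCasimir Λ f := by
    rw [Matrix.mul_assoc, trace_mul_comm, ← Matrix.mul_assoc, rigidBodyCasimir]
  have square_right : (fᵀ * Λ * (fᵀ * Λ)).trace = rigidBodyCasimir Λ f := by
    rw [← Matrix.mul_assoc, trace_transpose_mul_mul_transpose_mul hΛ, rigidBodyCasimir]
  have cross : (Λ * f * (fᵀ * Λ)).trace = (Λ ^ 2).trace := by
    rw [Matrix.mul_assoc, ← Matrix.mul_assoc f, hf, Matrix.one_mul, sq]
  have cross_comm : (fᵀ * Λ * (Λ * f)).trace = (Λ ^ 2).trace := by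
    rw [trace_mul_comm, cross]
  rw [bodyMomentum, sq, sub_mul, mul_sub, mul_sub]
  simp only [trace_sub, square_left, square_right, cross, cross_comm]
  ring

theorem legendreTransform_eq_conj_bodyMomentum (Λ : Matrix n n R) {f : Matrix n n R}
    (hf : f * fᵀ = 1) : legendreTransform Λ f = f * bodyMomentum Λ f * fᵀ :=
  calc f * Λ - Λ * fᵀ
      = f * Λ * (f * fᵀ) - f * fᵀ * Λ * fᵀ := by rw [hf, Matrix.mul_one, Matrix.one_mul]
    _ = f * (Λ * f - fᵀ * Λ) * fᵀ := by noncomm_ring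

theorem trace_conj_pow {P Q : Matrix n n R} (hPQ : P * Q = 1) (A : Matrix n n R) (p : ℕ) :
    ((P * A * Q) ^ p).trace = (A ^ p).trace := by
  let u : (Matrix n n R)ˣ := ⟨P, Q, hPQ, mul_eq_one_comm.mp hPQ⟩
  calc ((P * A * Q) ^ p).trace
      = (P * A ^ p * Q).trace := congrArg trace (Units.conj_pow u A p)
    _ = (A ^ p).trace := trace_units_conj u (A ^ p)

namespace IsMoserVeselov

variable {Λ : Matrix n n R} {ω : ℕ → Matrix n n R}

theorem bodyMomentum_succ (hMV : IsMoserVeselov Λ ω) (hω : ∀ k, ω k * (ω k)ᵀ = 1) (k : ℕ) :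
    bodyMomentum Λ (ω (k + 1)) = ω k * bodyMomentum Λ (ω k) * (ω k)ᵀ :=
  (hMV k).trans (legendreTransform_eq_conj_bodyMomentum Λ (hω k))

theorem trace_bodyMomentum_pow_eq (hMV : IsMoserVeselov Λ ω) (hω : ∀ k, ω k * (ω k)ᵀ = 1)
    (p k : ℕ) : (bodyMomentum Λ (ω k) ^ p).trace = (bodyMomentum Λ (ω 0) ^ p).trace := by
  induction k with
  | zero => rfl
  | succ k ih => rw [hMV.bodyMomentum_succ hω, trace_conj_pow (hω k), ih]

theorem rigidBodyCasimir_eq (hMV : IsMoserVeselov Λ ω) (hω : ∀ k, ω k * (ω k)ᵀ = 1)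
    (hΛ : Λ.IsSymm) (h2 : IsLeftRegular (2 : R)) (k : ℕ) :
    rigidBodyCasimir Λ (ω k) = rigidBodyCasimir Λ (ω 0) := by
  have h := hMV.trace_bodyMomentum_pow_eq hω 2 k
  rw [trace_bodyMomentum_sq hΛ (hω k), trace_bodyMomentum_sq hΛ (hω 0)] at h
  exact sub_left_injective (h2 h)

end IsMoserVeselov

theorem casimir_conserved_moser_veselov_general {Λ : Matrix n n R} (hΛ : Λ.IsSymm)
    (h2 : IsLeftRegular (2 : R)) {ω : ℕ → Matrix n n R} (hω : ∀ k, ω k * (ω k)ᵀ = 1)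
    (hMV : IsMoserVeselov Λ ω) :
    (∀ k, rigidBodyCasimir Λ (ω k) = rigidBodyCasimir Λ (ω 0)) ∧
    (∀ k, (bodyMomentum Λ (ω k) ^ 2).trace = (bodyMomentum Λ (ω 0) ^ 2).trace) :=
  ⟨hMV.rigidBodyCasimir_eq hω hΛ h2, hMV.trace_bodyMomentum_pow_eq hω 2⟩

end MoserVeselov

/-- Invariance of the symplectic leaves: the Casimir `C_SO(3) (f) = Tr (f Λ f Λ)` is
conserved by the discrete Euler–Poincaré algorithm for the rigid body.  If `(ω_k)` is a
sequence of orthogonal matrices satisfying the Moser–Veselov equations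
`Λ ω_{k+1} − ω_{k+1}ᵀ Λ = ω_k Λ − Λ ω_kᵀ`, then `Tr (ω_k Λ ω_k Λ)` is independent of
`k`; equivalently, `Tr ((Λ ω_k − ω_kᵀ Λ)²)` is independent of `k`. -/
theorem casimir_conserved_moser_veselov
    (Λ : Matrix (Fin 3) (Fin 3) ℝ) (hΛ : Λᵀ = Λ)
    (ω : ℕ → Matrix (Fin 3) (Fin 3) ℝ)
    (hω₁ : ∀ k, (ω k)ᵀ * ω k = 1) (hω₂ : ∀ k, ω k * (ω k)ᵀ = 1)
    (hMV : ∀ k, Λ * ω (k + 1) - (ω (k + 1))ᵀ * Λ = ω k * Λ - Λ * (ω k)ᵀ) :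
    (∀ k, (ω k * Λ * ω k * Λ).trace = (ω 0 * Λ * ω 0 * Λ).trace) ∧
    (∀ k, ((Λ * ω k - (ω k)ᵀ * Λ) * (Λ * ω k - (ω k)ᵀ * Λ)).trace
        = ((Λ * ω 0 - (ω 0)ᵀ * Λ) * (Λ * ω 0 - (ω 0)ᵀ * Λ)).trace) := by
  simpa only [rigidBodyCasimir, bodyMomentum, sq] using
    casimir_conserved_moser_veselov_general hΛ (IsRegular.of_ne_zero two_ne_zero).left hω₂ hMV
end
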